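/- Let p ∈ ℕ and f ∈ Ω_w(A*, p) ∪ Ω(A*, p). Then there is a constant C > 0 (depending on f) such that: (i) f_{m′,n′}(I) ≥ C f_{m,n}(I) for all I ∈ A* and all m′ ≥ m + p, n′ ≥ n + p; (ii) for each I ∈ A* there exists an integer N = N(I) such that f_{m,n}(I) ≥ (C/2) f*(I) for all m, n ≥ N. -/

import Mathlib

open MeasureTheory Filter Topology
open scoped Classical ENNReal NNReal

noncomputable section

/-- The left shift on one-sided sequences. -/
def shiftMap {A : Type} : (ℕ → A) → (ℕ → A) := fun x n => x (n + 1)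

/-- The cylinder set of a finite word. -/
def cyl {A : Type} (I : List A) : Set (ℕ → A) :=
  {x | ∀ i : Fin I.length, x i = I.get i}

/-- Membership of a word in the language of `X`. -/
def Lang {A : Type} (X : Set (ℕ → A)) (I : List A) : Prop :=
  (cyl I ∩ X).Nonempty

/-- `X` is a (nonempty) one-sided subshift. -/
def IsSubshift {A : Type} [TopologicalSpace A] (X : Set (ℕ → A)) : Prop :=
  X.Nonempty ∧ IsCompact X ∧ shiftMap '' X ⊆ X

/-- weak `p`-specification -/
def WeakSpecification {A : Type} (X : Set (ℕ → A)) (p : ℕ) : Prop :=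
  ∀ I J : List A, Lang X I → Lang X J →
    ∃ K : List A, K.length ≤ p ∧ Lang X (I ++ K ++ J)

/-- `p`-specification -/
def Specification {A : Type} (X : Set (ℕ → A)) (p : ℕ) : Prop :=
  ∀ I J : List A, Lang X I → Lang X J →
    ∃ K : List A, K.length = p ∧ Lang X (I ++ K ++ J)

/-- invariant probability measures supported on `X` (predicate on plain measures) -/
def InvOn {A : Type} [MeasurableSpace A] (X : Set (ℕ → A)) (μ : Measure (ℕ → A)) : Prop :=
  IsProbabilityMeasure μ ∧ μ.map shiftMap = μ ∧ μ X = 1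

/-- the set of shift-invariant probability measures on `X` -/
def MInv {A : Type} [MeasurableSpace A] (X : Set (ℕ → A)) :
    Set (ProbabilityMeasure (ℕ → A)) :=
  {μ | (μ : Measure (ℕ → A)).map shiftMap = (μ : Measure (ℕ → A)) ∧
    (μ : Measure (ℕ → A)) X = 1}

/-- measure of a word: `μ([I] ∩ X)` -/
def mw {A : Type} [MeasurableSpace A] (X : Set (ℕ → A)) (μ : Measure (ℕ → A))
    (I : List A) : ℝ :=
  (μ (cyl I ∩ X)).toReal

/-- the initial word of length `n` of a sequence -/
def wordOf {A : Type} (x : ℕ → A) (n : ℕ) : List A := List.ofFn (fun i : Fin n => x i)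

/-- `n`-block entropy -/
def Hblock {A : Type} [Fintype A] [MeasurableSpace A] (X : Set (ℕ → A))
    (μ : Measure (ℕ → A)) (n : ℕ) : ℝ :=
  -∑ w : Fin n → A, mw X μ (List.ofFn w) * Real.log (mw X μ (List.ofFn w))

/-- measure-theoretic entropy (the limit exists for invariant measures; `liminf` realizes it) -/
def ent {A : Type} [Fintype A] [MeasurableSpace A] (X : Set (ℕ → A))
    (μ : Measure (ℕ → A)) : ℝ :=
  liminf (fun n : ℕ => Hblock X μ n / n) atTop

/-- extended logarithm: `log t`, with value `⊥` for `t ≤ 0` -/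
def elog (t : ℝ) : EReal := if t ≤ 0 then ⊥ else ((Real.log t : ℝ) : EReal)

/-- the integral `∫ log g dμ`, valued in `ℝ ∪ {−∞}` -/
def intlog {Ω : Type*} [MeasurableSpace Ω] (μ : Measure Ω) (g : Ω → ℝ) : EReal :=
  ((∫⁻ x, ENNReal.ofReal (Real.log (g x)) ∂μ : ℝ≥0∞) : EReal) -
    ((∫⁻ x, (if g x ≤ 0 then (⊤ : ℝ≥0∞) else ENNReal.ofReal (-Real.log (g x))) ∂μ : ℝ≥0∞) : EReal)

/-- sub-additive potential `Φ = (log φ_n)_{n ≥ 1}` -/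
def SubaddPot {A : Type} [TopologicalSpace A] (X : Set (ℕ → A))
    (φ : ℕ → (ℕ → A) → ℝ) : Prop :=
  (∀ n, 1 ≤ n → ContinuousOn (φ n) X) ∧
  (∀ n, 1 ≤ n → ∀ x ∈ X, 0 ≤ φ n x) ∧
  ∃ c > (0:ℝ), ∀ n m : ℕ, 1 ≤ n → 1 ≤ m → ∀ x ∈ X,
    φ (n + m) x ≤ c * φ n x * φ m (shiftMap^[n] x)

/-- `Φ_*(μ) = lim (1/n) ∫ log φ_n dμ` (realized as a `liminf` in `EReal`) -/
def PhiStar {A : Type} [MeasurableSpace A] (μ : Measure (ℕ → A))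
    (φ : ℕ → (ℕ → A) → ℝ) : EReal :=
  liminf (fun n : ℕ => (((n : ℝ)⁻¹ : ℝ) : EReal) * intlog μ (φ n)) atTop

/-- sub-multiplicative function on the language of `X` -/
def Submult {A : Type} (X : Set (ℕ → A)) (φ : List A → ℝ) : Prop :=
  (∀ I, Lang X I → 0 ≤ φ I) ∧ φ [] = 1 ∧
  ∃ c > (0:ℝ), ∀ I J : List A, Lang X (I ++ J) → φ (I ++ J) ≤ c⁻¹ * φ I * φ J

/-- the potential generated by a word function -/
def genPot {A : Type} (φ : List A → ℝ) : ℕ → (ℕ → A) → ℝ := fun n x => φ (wordOf x n)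

/-- the scaled potential `cΦ = (log φ_n^c)` -/
def scPot {Ω : Type*} (c : ℝ) (φ : ℕ → Ω → ℝ) : ℕ → Ω → ℝ := fun n x => φ n x ^ c

/-- the "pressure value" `Φ_*(μ) + h_μ` -/
def eqVal {A : Type} [Fintype A] [MeasurableSpace A] (X : Set (ℕ → A))
    (φ : ℕ → (ℕ → A) → ℝ) (μ : ProbabilityMeasure (ℕ → A)) : EReal :=
  PhiStar (μ : Measure (ℕ → A)) φ + ((ent X (μ : Measure (ℕ → A)) : ℝ) : EReal)

/-- the set of equilibrium states of `Φ` -/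
def EqSet {A : Type} [Fintype A] [MeasurableSpace A] (X : Set (ℕ → A))
    (φ : ℕ → (ℕ → A) → ℝ) : Set (ProbabilityMeasure (ℕ → A)) :=
  {μ | μ ∈ MInv X ∧ eqVal X φ μ = ⨆ η ∈ MInv X, eqVal X φ η}

/-- sequence map induced by a one-block map -/
def blockMap {A B : Type} (π : A → B) : (ℕ → A) → (ℕ → B) := fun x n => π (x n)

/-- pushforward of a probability measure under a one-block map -/
def pushM {A B : Type} [MeasurableSpace A] [MeasurableSpace B] (π : A → B)
    (μ : ProbabilityMeasure (ℕ → A)) : Measure (ℕ → B) :=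
  (μ : Measure (ℕ → A)).map (blockMap π)

/-- conditional equilibrium states of `Φ` over `ν` -/
def CondEqSet {A B : Type} [Fintype A] [MeasurableSpace A] [MeasurableSpace B]
    (X : Set (ℕ → A)) (π : A → B) (φ : ℕ → (ℕ → A) → ℝ) (ν : Measure (ℕ → B)) :
    Set (ProbabilityMeasure (ℕ → A)) :=
  {μ | μ ∈ MInv X ∧ pushM π μ = ν ∧
    eqVal X φ μ = ⨆ η ∈ {η | η ∈ MInv X ∧ pushM π η = ν}, eqVal X φ η}

/-- the projected word function `ψ(J) = Σ_{I : πI = J} φ(I)` -/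
def psiProj {A B : Type} [Fintype A] (X : Set (ℕ → A)) (π : A → B) (φ : List A → ℝ)
    (J : List B) : ℝ :=
  ∑ w : Fin J.length → A,
    if Lang X (List.ofFn w) ∧ List.map π (List.ofFn w) = J then φ (List.ofFn w) else 0

/-- `φ^{(2)}(J) = (Σ_{I : πI = J} φ(I)^{1/a₁})^{a₁}` -/
def phiTwo {A B : Type} [Fintype A] (X : Set (ℕ → A)) (π : A → B) (φ : List A → ℝ)
    (a₁ : ℝ) (J : List B) : ℝ :=
  (∑ w : Fin J.length → A,
    if Lang X (List.ofFn w) ∧ List.map π (List.ofFn w) = J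
    then φ (List.ofFn w) ^ a₁⁻¹ else 0) ^ a₁

/-- `a`-weighted pressure value for `k = 2` -/
def wVal2 {A B : Type} [Fintype A] [Fintype B] [MeasurableSpace A] [MeasurableSpace B]
    (X : Set (ℕ → A)) (Y : Set (ℕ → B)) (π : A → B) (φ : ℕ → (ℕ → A) → ℝ)
    (a₁ a₂ : ℝ) (μ : ProbabilityMeasure (ℕ → A)) : EReal :=
  PhiStar (μ : Measure (ℕ → A)) φ +
    ((a₁ * ent X (μ : Measure (ℕ → A)) + a₂ * ent Y (pushM π μ) : ℝ) : EReal)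

/-- the set of `a`-weighted equilibrium states, `k = 2` -/
def WEqSet2 {A B : Type} [Fintype A] [Fintype B] [MeasurableSpace A] [MeasurableSpace B]
    (X : Set (ℕ → A)) (Y : Set (ℕ → B)) (π : A → B) (φ : ℕ → (ℕ → A) → ℝ)
    (a₁ a₂ : ℝ) : Set (ProbabilityMeasure (ℕ → A)) :=
  {μ | μ ∈ MInv X ∧ wVal2 X Y π φ a₁ a₂ μ = ⨆ η ∈ MInv X, wVal2 X Y π φ a₁ a₂ η}

/-- convexity of a set of probability measures -/
def ConvexPM {Ω : Type*} [MeasurableSpace Ω] (S : Set (ProbabilityMeasure Ω)) : Prop :=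
  ∀ μ₁ ∈ S, ∀ μ₂ ∈ S, ∀ t : ℝ, 0 ≤ t → t ≤ 1 → ∀ μ : ProbabilityMeasure Ω,
    (μ : Measure Ω) = ENNReal.ofReal t • (μ₁ : Measure Ω) +
      ENNReal.ofReal (1 - t) • (μ₂ : Measure Ω) → μ ∈ S

/-- extreme points of a set of probability measures -/
def IsExtremePM {Ω : Type*} [MeasurableSpace Ω] (S : Set (ProbabilityMeasure Ω))
    (μ : ProbabilityMeasure Ω) : Prop :=
  μ ∈ S ∧ ∀ μ₁ ∈ S, ∀ μ₂ ∈ S, ∀ t : ℝ, 0 < t → t < 1 →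
    (μ : Measure Ω) = ENNReal.ofReal t • (μ₁ : Measure Ω) +
      ENNReal.ofReal (1 - t) • (μ₂ : Measure Ω) → μ₁ = μ₂

/-- the class `Ω_w(A*, p)` -/
def OmegaW {A : Type} [Fintype A] (p : ℕ) (f : List A → ℝ) : Prop :=
  (∀ I, 0 ≤ f I ∧ f I ≤ 1) ∧
  ∃ c > (0:ℝ),
    (∀ n : ℕ, ∑ w : Fin n → A, f (List.ofFn w) = 1) ∧
    (∀ I J : List A, ∃ K : List A, K.length ≤ p ∧ c * (f I * f J) ≤ f (I ++ K ++ J)) ∧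
    (∀ I : List A, ∃ i j : A, c * f I ≤ f (i :: I) ∧ c * f I ≤ f (I ++ [j]))

/-- the class `Ω(A*, p)` -/
def OmegaS {A : Type} [Fintype A] (p : ℕ) (f : List A → ℝ) : Prop :=
  (∀ I, 0 ≤ f I ∧ f I ≤ 1) ∧
  ∃ c > (0:ℝ),
    (∀ n : ℕ, ∑ w : Fin n → A, f (List.ofFn w) = 1) ∧
    (∀ I J : List A, ∃ K : List A, K.length = p ∧ c * (f I * f J) ≤ f (I ++ K ++ J))

/-- `f_{m,n}(I)` -/
def fmn {A : Type} [Fintype A] (f : List A → ℝ) (m n : ℕ) (I : List A) : ℝ :=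
  ∑ u : Fin m → A, ∑ v : Fin n → A, f (List.ofFn u ++ I ++ List.ofFn v)

/-- `f*(I) = sup_{m,n} f_{m,n}(I)` -/
def fstar {A : Type} [Fintype A] (f : List A → ℝ) (I : List A) : ℝ :=
  ⨆ m : ℕ, ⨆ n : ℕ, fmn f m n I

/-- the class `D_w(X, p)` -/
def Dw {A : Type} (X : Set (ℕ → A)) (p : ℕ) (φ : List A → ℝ) : Prop :=
  (∀ I, Lang X I → 0 ≤ φ I) ∧ (∃ I, Lang X I ∧ I ≠ [] ∧ 0 < φ I) ∧
  ∃ c : ℝ, 0 < c ∧ c ≤ 1 ∧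
    (∀ I J : List A, Lang X (I ++ J) → φ (I ++ J) ≤ c⁻¹ * φ I * φ J) ∧
    (∀ I J : List A, Lang X I → Lang X J →
      ∃ K : List A, K.length ≤ p ∧ Lang X (I ++ K ++ J) ∧
        c * (φ I * φ J) ≤ φ (I ++ K ++ J))

/-- the class `D(X, p)` -/
def Ds {A : Type} (X : Set (ℕ → A)) (p : ℕ) (φ : List A → ℝ) : Prop :=
  (∀ I, Lang X I → 0 ≤ φ I) ∧ (∃ I, Lang X I ∧ I ≠ [] ∧ 0 < φ I) ∧
  ∃ c : ℝ, 0 < c ∧ c ≤ 1 ∧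
    (∀ I J : List A, Lang X (I ++ J) → φ (I ++ J) ≤ c⁻¹ * φ I * φ J) ∧
    (∀ I J : List A, Lang X I → Lang X J →
      ∃ K : List A, K.length = p ∧ Lang X (I ++ K ++ J) ∧
        c * (φ I * φ J) ≤ φ (I ++ K ++ J))

end

noncomputable section

/-- iterated one-block maps along a chain of alphabets: `tauFrom π j i : B j → B (j+i)` -/
def tauFrom {B : ℕ → Type} (π : ∀ i, B i → B (i+1)) (j : ℕ) : (i : ℕ) → B j → B (j + i)
  | 0 => id
  | (i+1) => fun a => π (j + i) (tauFrom π j i a)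

/-- weighted pressure value along a chain starting at index `j`, with `k` weights `w 0, …, w (k-1)` -/
def wValGen {B : ℕ → Type} [∀ i, Fintype (B i)] [∀ i, MeasurableSpace (B i)]
    (π : ∀ i, B i → B (i+1)) (X : ∀ i, Set (ℕ → B i)) (j k : ℕ) (w : ℕ → ℝ)
    (φ : ℕ → (ℕ → B j) → ℝ) (μ : ProbabilityMeasure (ℕ → B j)) : EReal :=
  PhiStar (μ : Measure (ℕ → B j)) φ +
    ((∑ i ∈ Finset.range k, w i *
      ent (X (j + i)) ((μ : Measure (ℕ → B j)).map (blockMap (tauFrom π j i))) : ℝ) : EReal)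

/-- weighted equilibrium states along a chain -/
def wEqSetGen {B : ℕ → Type} [∀ i, Fintype (B i)] [∀ i, MeasurableSpace (B i)]
    (π : ∀ i, B i → B (i+1)) (X : ∀ i, Set (ℕ → B i)) (j k : ℕ) (w : ℕ → ℝ)
    (φ : ℕ → (ℕ → B j) → ℝ) : Set (ProbabilityMeasure (ℕ → B j)) :=
  {μ | μ ∈ MInv (X j) ∧
    wValGen π X j k w φ μ = ⨆ η ∈ MInv (X j), wValGen π X j k w φ η}

end

/-!
Both classes satisfy a one-sided bridging inequality `c f(I) f(J) ≤ f(LIKJ)` with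
`|L| + |K| = p` exactly. For `Ω_w` the shorter bridge given by weak specification is
completed to total length `p` by extending the word to the left. Summing the inequality over
`I ∈ A^k` (where `f` has total mass one) and over the words `J = uI'` with `u ∈ A^m` shows that
passing from `m` to any `m' ≥ m + p` costs at most the constant `c / (p + 1)`, because a word of
length `p + k + m` has only `p + 1` decompositions `LIKu`, one for each value of `|L|`. Both
classes are invariant under reversing words, so the same holds on the right, which gives (i); then
(ii) follows by starting (i) from a pair `(m, n)` that realizes more than half of the supremum.
-/

open Finset.HasAntidiagonal (antidiagonal mem_antidiagonal)

lemma ofFn_comp_rev {A : Type*} {n : ℕ} (w : Fin n → A) :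
    List.ofFn (w ∘ Fin.rev) = (List.ofFn w).reverse := by
  refine List.ext_getElem (by simp) fun i _ _ => ?_
  simp [Fin.rev, Nat.sub_sub, add_comm]

section WordSum

variable {A M : Type*} [Fintype A]

/-- The sum of a word function over all words of length `n`, with `A^n` encoded as `Fin n → A`. -/
def wordSum [AddCommMonoid M] (F : List A → M) (n : ℕ) : M :=
  ∑ w : Fin n → A, F (List.ofFn w)

lemma wordSum_add [AddCommMonoid M] (F : List A → M) (m n : ℕ) :
    wordSum F (m + n) = wordSum (fun u => wordSum (fun v => F (u ++ v)) n) m := by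
  simp only [wordSum, ← Fintype.sum_prod_type',
    ← (Fin.appendEquiv m n).sum_comp fun w : Fin (m + n) → A => F (List.ofFn w)]
  simp only [Fin.appendEquiv, Equiv.coe_fn_mk, List.ofFn_fin_append]

lemma wordSum_comm [AddCommMonoid M] (F : List A → List A → M) (m n : ℕ) :
    wordSum (fun u => wordSum (F u) n) m = wordSum (fun v => wordSum (fun u => F u v) m) n :=
  Finset.sum_comm

lemma wordSum_sum [AddCommMonoid M] {ι : Type*} (s : Finset ι) (F : ι → List A → M) (n : ℕ) :
    wordSum (fun w => ∑ a ∈ s, F a w) n = ∑ a ∈ s, wordSum (F a) n :=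
  Finset.sum_comm

lemma wordSum_reverse [AddCommMonoid M] (F : List A → M) (n : ℕ) :
    wordSum (fun w => F w.reverse) n = wordSum F n := by
  simp only [wordSum, ← ofFn_comp_rev]
  exact (Fin.revPerm.arrowCongr (Equiv.refl A)).sum_comp fun w : Fin n → A => F (List.ofFn w)

lemma mul_wordSum [NonUnitalNonAssocSemiring M] (a : M) (F : List A → M) (n : ℕ) :
    a * wordSum F n = wordSum (fun w => a * F w) n :=
  Finset.mul_sum ..

lemma wordSum_mul_wordSum [NonUnitalNonAssocSemiring M] (F G : List A → M) (m n : ℕ) :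
    wordSum F m * wordSum G n = wordSum (fun u => wordSum (fun v => F u * G v) n) m :=
  Finset.sum_mul_sum ..

variable [AddCommMonoid M] [PartialOrder M] [IsOrderedAddMonoid M] {F G : List A → M}

lemma wordSum_nonneg (hF : ∀ w, 0 ≤ F w) (n : ℕ) : 0 ≤ wordSum F n :=
  Finset.sum_nonneg fun _ _ => hF _

lemma wordSum_mono (h : ∀ w, F w ≤ G w) (n : ℕ) : wordSum F n ≤ wordSum G n :=
  Finset.sum_le_sum fun _ _ => h _

lemma le_wordSum_length (hF : ∀ w, 0 ≤ F w) (w : List A) : F w ≤ wordSum F w.length := by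
  simpa only [wordSum, List.ofFn_get] using
    Finset.single_le_sum (f := fun u : Fin w.length → A => F (List.ofFn u))
      (fun _ _ => hF _) (Finset.mem_univ w.get)

end WordSum

section Bridging

variable {A : Type*} {f : List A → ℝ} {c : ℝ} {p : ℕ}

/-- Common consequence of the specification axioms of `Ω_w(A*, p)` and `Ω(A*, p)`, with
constant `c`: the letters that join `I` to `J` are split between a gap `K` and a prefix `L`, so
that their total number is exactly `p`. -/
def LeftBridging (p : ℕ) (c : ℝ) (f : List A → ℝ) : Prop :=
  ∀ I J : List A, ∃ L K : List A,
    L.length + K.length = p ∧ c * (f I * f J) ≤ f (L ++ I ++ K ++ J)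

lemma exists_append_length_eq (hc : 0 ≤ c) (h : ∀ I, ∃ i, c * f I ≤ f (i :: I)) (I : List A) :
    ∀ d : ℕ, ∃ L : List A, L.length = d ∧ c ^ d * f I ≤ f (L ++ I)
  | 0 => ⟨[], by simp⟩
  | d + 1 => by
    obtain ⟨L, rfl, hL⟩ := exists_append_length_eq hc h I d
    obtain ⟨i, hi⟩ := h (L ++ I)
    refine ⟨i :: L, rfl, ?_⟩
    calc c ^ (L.length + 1) * f I = c * (c ^ L.length * f I) := by ring
      _ ≤ c * f (L ++ I) := by gcongr
      _ ≤ f (i :: L ++ I) := hi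

lemma leftBridging_of_length_le (hf : ∀ I, 0 ≤ f I) (hc : 0 ≤ c) (hc₁ : c ≤ 1)
    (hbridge : ∀ I J : List A, ∃ K : List A, K.length ≤ p ∧ c * (f I * f J) ≤ f (I ++ K ++ J))
    (hext : ∀ I, ∃ i, c * f I ≤ f (i :: I)) :
    LeftBridging p (c ^ (p + 1)) f := by
  intro I J
  obtain ⟨K, hKp, hK⟩ := hbridge I J
  obtain ⟨L, hLlen, hL⟩ := exists_append_length_eq hc hext (I ++ K ++ J) (p - K.length)
  refine ⟨L, K, by omega, ?_⟩
  calc c ^ (p + 1) * (f I * f J) = c ^ p * (c * (f I * f J)) := by ring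
    _ ≤ c ^ (p - K.length) * (c * (f I * f J)) := by
        have := mul_nonneg (hf I) (hf J)
        have := pow_le_pow_of_le_one hc hc₁ (p.sub_le K.length)
        gcongr
    _ ≤ c ^ (p - K.length) * f (I ++ K ++ J) := by gcongr
    _ ≤ f (L ++ I ++ K ++ J) := by simpa only [List.append_assoc] using hL

variable [Fintype A]

lemma LeftBridging.mul_le_sum (h : LeftBridging p c f) (hf : ∀ I, 0 ≤ f I) (I J : List A) :
    c * (f I * f J) ≤ ∑ ij ∈ antidiagonal p,
      wordSum (fun L => wordSum (fun K => f (L ++ I ++ K ++ J)) ij.2) ij.1 := by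
  obtain ⟨L, K, hp, hLK⟩ := h I J
  calc c * (f I * f J) ≤ f (L ++ I ++ K ++ J) := hLK
    _ ≤ wordSum (fun K' => f (L ++ I ++ K' ++ J)) K.length :=
        le_wordSum_length (F := fun K' => f (L ++ I ++ K' ++ J)) (fun _ => hf _) K
    _ ≤ wordSum (fun L' => wordSum (fun K' => f (L' ++ I ++ K' ++ J)) K.length) L.length :=
        le_wordSum_length (F := fun L' => wordSum (fun K' => f (L' ++ I ++ K' ++ J)) K.length)
          (fun _ => wordSum_nonneg (fun _ => hf _) _) L
    _ ≤ _ := Finset.single_le_sum (a := (L.length, K.length))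
        (f := fun ij => wordSum (fun L => wordSum (fun K => f (L ++ I ++ K ++ J)) ij.2) ij.1)
        (fun _ _ => wordSum_nonneg (fun _ => wordSum_nonneg (fun _ => hf _) _) _)
        (mem_antidiagonal.2 hp)

lemma LeftBridging.mul_wordSum_mul_wordSum_le (h : LeftBridging p c f) (hf : ∀ I, 0 ≤ f I)
    (J : List A) (k m : ℕ) :
    c * (wordSum f k * wordSum (fun u => f (u ++ J)) m) ≤
      (p + 1) * wordSum (fun u => f (u ++ J)) (p + k + m) := by
  have sum_eq (i j : ℕ) (hij : i + j = p) :
      wordSum (fun I => wordSum (fun u => wordSum (fun L => wordSum (fun K =>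
        f (L ++ I ++ K ++ (u ++ J))) j) i) m) k =
      wordSum (fun u => f (u ++ J)) (p + k + m) := by
    rw [show p + k + m = i + (k + (j + m)) by omega]
    simp only [wordSum_add, List.append_assoc, wordSum_comm _ m i, wordSum_comm _ k i,
      wordSum_comm _ m j]
  calc c * (wordSum f k * wordSum (fun u => f (u ++ J)) m)
      = wordSum (fun I => wordSum (fun u => c * (f I * f (u ++ J))) m) k := by
        rw [wordSum_mul_wordSum]
        simp only [mul_wordSum]
    _ ≤ wordSum (fun I => wordSum (fun u => ∑ ij ∈ antidiagonal p,
          wordSum (fun L => wordSum (fun K => f (L ++ I ++ K ++ (u ++ J))) ij.2) ij.1) m) k :=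
        wordSum_mono (fun I => wordSum_mono (fun u => h.mul_le_sum hf I (u ++ J)) m) k
    _ = ∑ ij ∈ antidiagonal p, wordSum (fun I => wordSum (fun u =>
          wordSum (fun L => wordSum (fun K => f (L ++ I ++ K ++ (u ++ J))) ij.2) ij.1) m) k := by
        simp only [wordSum_sum]
    _ = ∑ _ij ∈ antidiagonal p, wordSum (fun u => f (u ++ J)) (p + k + m) :=
        Finset.sum_congr rfl fun ij hij => sum_eq ij.1 ij.2 (mem_antidiagonal.1 hij)
    _ = (p + 1) * wordSum (fun u => f (u ++ J)) (p + k + m) := by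
        rw [Finset.sum_const, Finset.Nat.card_antidiagonal, nsmul_eq_mul, Nat.cast_add_one]

end Bridging

section Extension

variable {A : Type} [Fintype A] {f : List A → ℝ} {c : ℝ} {p : ℕ}

lemma fmn_eq_wordSum (f : List A → ℝ) (m n : ℕ) (I : List A) :
    fmn f m n I = wordSum (fun u => wordSum (fun v => f (u ++ I ++ v)) n) m :=
  rfl

lemma fmn_nonneg (hf : ∀ I, 0 ≤ f I) (m n : ℕ) (I : List A) : 0 ≤ fmn f m n I :=
  wordSum_nonneg (fun u => wordSum_nonneg (fun v => hf (u ++ I ++ v)) n) m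

lemma fmn_reverse (f : List A → ℝ) (m n : ℕ) (I : List A) :
    fmn (fun J => f J.reverse) m n I = fmn f n m I.reverse := by
  rw [fmn_eq_wordSum, fmn_eq_wordSum, wordSum_comm, ← wordSum_reverse]
  congr 1
  funext v
  rw [← wordSum_reverse]
  simp

lemma LeftBridging.mul_fmn_le (h : LeftBridging p c f) (hf : ∀ I, 0 ≤ f I)
    (hmass : ∀ n, wordSum f n = 1) (I : List A) {m m' : ℕ} (n : ℕ) (hm : m + p ≤ m') :
    c / (p + 1) * fmn f m n I ≤ fmn f m' n I := by
  obtain ⟨k, rfl⟩ := Nat.exists_eq_add_of_le hm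
  have hp : (0 : ℝ) < p + 1 := by positivity
  rw [fmn_eq_wordSum, fmn_eq_wordSum, wordSum_comm, wordSum_comm _ (m + p + k), mul_wordSum]
  refine wordSum_mono (fun v => ?_) n
  rw [div_mul_eq_mul_div, div_le_iff₀' hp, show m + p + k = p + k + m by omega]
  simpa only [hmass, one_mul, List.append_assoc] using
    h.mul_wordSum_mul_wordSum_le hf (I ++ v) k m

lemma nonneg_of_omegaW_or_omegaS (hf : OmegaW p f ∨ OmegaS p f) (I : List A) : 0 ≤ f I :=
  (hf.elim (fun h => h.1 I) fun h => h.1 I).1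

lemma OmegaW.reverse (hf : OmegaW p f) : OmegaW p fun I => f I.reverse := by
  obtain ⟨hbound, c, hc, hmass, hbridge, hext⟩ := hf
  refine ⟨fun I => hbound _, c, hc, fun n => (wordSum_reverse f n).trans (hmass n), ?_, ?_⟩
  · intro I J
    obtain ⟨K, hKp, hK⟩ := hbridge J.reverse I.reverse
    exact ⟨K.reverse, by simpa using hKp, by simpa [mul_comm] using hK⟩
  · intro I
    obtain ⟨i, j, hi, hj⟩ := hext I.reverse
    exact ⟨j, i, by simpa using hj, by simpa using hi⟩

lemma OmegaS.reverse (hf : OmegaS p f) : OmegaS p fun I => f I.reverse := by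
  obtain ⟨hbound, c, hc, hmass, hbridge⟩ := hf
  refine ⟨fun I => hbound _, c, hc, fun n => (wordSum_reverse f n).trans (hmass n), ?_⟩
  intro I J
  obtain ⟨K, hKp, hK⟩ := hbridge J.reverse I.reverse
  exact ⟨K.reverse, by simpa using hKp, by simpa [mul_comm] using hK⟩

lemma OmegaW.exists_leftBridging (hf : OmegaW p f) : ∃ c > 0, LeftBridging p c f := by
  obtain ⟨hbound, c, hc, hmass, hbridge, hext⟩ := hf
  have hc₁ : c ≤ 1 := by
    have hnil : f [] = 1 := by simpa using hmass 0
    obtain ⟨K, -, hK⟩ := hbridge [] []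
    simpa [hnil] using hK.trans (hbound _).2
  exact ⟨c ^ (p + 1), pow_pos hc _, leftBridging_of_length_le (fun I => (hbound I).1) hc.le hc₁
    hbridge fun I => (hext I).imp fun _ ⟨_, hi, _⟩ => hi⟩

lemma OmegaS.exists_leftBridging (hf : OmegaS p f) : ∃ c > 0, LeftBridging p c f := by
  obtain ⟨-, c, hc, -, hbridge⟩ := hf
  refine ⟨c, hc, fun I J => ?_⟩
  obtain ⟨K, hKp, hK⟩ := hbridge I J
  exact ⟨[], K, by simpa using hKp, hK⟩

lemma exists_mul_fmn_le_left (hf : OmegaW p f ∨ OmegaS p f) :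
    ∃ C > 0, ∀ (I : List A) (m n m' : ℕ), m + p ≤ m' → C * fmn f m n I ≤ fmn f m' n I := by
  obtain ⟨c, hc, hbridge⟩ : ∃ c > 0, LeftBridging p c f :=
    hf.elim OmegaW.exists_leftBridging OmegaS.exists_leftBridging
  have hmass : ∀ n, wordSum f n = 1 := by
    rcases hf with ⟨-, _, -, hmass, -⟩ | ⟨-, _, -, hmass, -⟩ <;> exact hmass
  exact ⟨c / (p + 1), by positivity, fun I m n m' hm =>
    hbridge.mul_fmn_le (nonneg_of_omegaW_or_omegaS hf) hmass I n hm⟩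

lemma exists_mul_fmn_le_right (hf : OmegaW p f ∨ OmegaS p f) :
    ∃ C > 0, ∀ (I : List A) (m n n' : ℕ), n + p ≤ n' → C * fmn f m n I ≤ fmn f m n' I := by
  obtain ⟨C, hC, h⟩ := exists_mul_fmn_le_left (hf.imp OmegaW.reverse OmegaS.reverse)
  refine ⟨C, hC, fun I m n n' hn => ?_⟩
  simpa only [fmn_reverse, List.reverse_reverse] using h I.reverse n m n' hn

end Extension

lemma exists_forall_ge_mul_iSup_le {a : ℕ → ℕ → ℝ} {C C' : ℝ} {p : ℕ} (ha : ∀ m n, 0 ≤ a m n)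
    (hC : 0 < C) (hC' : C' < C)
    (h : ∀ m n m' n', m + p ≤ m' → n + p ≤ n' → C * a m n ≤ a m' n') :
    ∃ N, ∀ m n, N ≤ m → N ≤ n → C' * ⨆ m, ⨆ n, a m n ≤ a m n := by
  have hsup : 0 ≤ ⨆ m, ⨆ n, a m n := Real.iSup_nonneg fun m => Real.iSup_nonneg (ha m)
  rcases hsup.eq_or_lt with hzero | hpos
  · exact ⟨0, fun m n _ _ => by simpa only [← hzero, mul_zero] using ha m n⟩
  · have hlt : C' * (⨆ m, ⨆ n, a m n) / C < ⨆ m, ⨆ n, a m n :=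
      (div_lt_iff₀' hC).2 (mul_lt_mul_of_pos_right hC' hpos)
    obtain ⟨m₀, hm₀⟩ := exists_lt_of_lt_ciSup hlt
    obtain ⟨n₀, hn₀⟩ := exists_lt_of_lt_ciSup hm₀
    refine ⟨max m₀ n₀ + p, fun m n hm hn => ?_⟩
    calc C' * ⨆ m, ⨆ n, a m n ≤ C * a m₀ n₀ := ((div_lt_iff₀' hC).1 hn₀).le
      _ ≤ a m n := h m₀ n₀ m n (by omega) (by omega)

/-- Lemma 4.3 / `lem-t1`: for `f ∈ Ω_w(A*,p) ∪ Ω(A*,p)` there is `C > 0` with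
(i) `f_{m',n'}(I) ≥ C f_{m,n}(I)` for `m' ≥ m+p`, `n' ≥ n+p`, and (ii) for each `I` there is
`N(I)` with `f_{m,n}(I) ≥ (C/2) f*(I)` for all `m,n ≥ N`. -/
theorem weighted_eq_states_stmt_10 {A : Type} [Fintype A]
    (p : ℕ) (f : List A → ℝ) (hf : OmegaW p f ∨ OmegaS p f) :
    ∃ C > (0:ℝ),
      (∀ I : List A, ∀ m n m' n' : ℕ, m + p ≤ m' → n + p ≤ n' →
        C * fmn f m n I ≤ fmn f m' n' I) ∧
      (∀ I : List A, ∃ N : ℕ, ∀ m n : ℕ, N ≤ m → N ≤ n →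
        C / 2 * fstar f I ≤ fmn f m n I) := by
  obtain ⟨C₁, hC₁, hleft⟩ := exists_mul_fmn_le_left hf
  obtain ⟨C₂, hC₂, hright⟩ := exists_mul_fmn_le_right hf
  have hboth (I : List A) (m n m' n' : ℕ) (hm : m + p ≤ m') (hn : n + p ≤ n') :
      C₂ * C₁ * fmn f m n I ≤ fmn f m' n' I :=
    calc C₂ * C₁ * fmn f m n I = C₂ * (C₁ * fmn f m n I) := mul_assoc ..
      _ ≤ C₂ * fmn f m' n I := by gcongr; exact hleft I m n m' hm
      _ ≤ fmn f m' n' I := hright I m' n n' hn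
  have hC : 0 < C₂ * C₁ := mul_pos hC₂ hC₁
  exact ⟨C₂ * C₁, hC, hboth, fun I => exists_forall_ge_mul_iSup_le
    (fun m n => fmn_nonneg (nonneg_of_omegaW_or_omegaS hf) m n I) hC (half_lt_self hC) (hboth I)⟩
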